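/- Let a, b be real numbers and let u, v : ℝ × ℝ → ℝ be smooth (C^∞) on [0,∞) × [0,1], satisfying the coupled Burgers' equations ∂_t u = ∂_{xx} u − u ∂_x u − a ∂_x(uv) and ∂_t v = ∂_{xx} v − v ∂_x v − b ∂_x(uv) for all t ≥ 0 and x ∈ [0,1], with Dirichlet boundary conditions u(t,0) = u(t,1) = v(t,0) = v(t,1) = 0 for all t ≥ 0. Define J(t) := ½(∫₀¹ (∂_x u(t,x))² dx + ∫₀¹ (∂_x v(t,x))² dx) and K(t) := ½(∫₀¹ (∂_{xx} u(t,x))² dx + ∫₀¹ (∂_{xx} v(t,x))² dx). Then for every t ≥ 0, J'(t) ≤ -2 K(t) + 8 J(t) K(t)^{1/2} + 8√3 · 2^{1/4} (|a|+|b|) J(t)^{3/4} K(t)^{3/4}. -/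

import Mathlib

/-!
Differentiating `J` under the integral and integrating by parts in `x`, where `∂ₜu` and `∂ₜv` vanish
on the boundary together with `u` and `v`, gives `J' = -∫ ∂ₓₓu ∂ₜu - ∫ ∂ₓₓv ∂ₜv`. Substituting the
equations produces `-2K` and integrals `∫ f ∂ₓg ∂ₓₓh` with `f, g, h ∈ {u, v}`. Since `f` vanishes at
`x = 0`, `sup |f| ≤ ‖∂ₓf‖`, so Cauchy–Schwarz bounds each of them by `‖∂ₓf‖ ‖∂ₓg‖ ‖∂ₓₓh‖`, and
altogether `J' ≤ -2K + 2√2 (1 + |a| + |b|) J √K`. Finally `J ≤ K` by Poincaré's inequality, whence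
`J √K ≤ J^(3/4) K^(3/4)` for the terms carrying `|a| + |b|`.

The values of `deriv` at points of the boundary depend on how `u` and `v` are extended outside the
strip, so the equations are used at interior points only and reach the boundary by continuity.
-/

open Set MeasureTheory

section L2

theorem abs_integral_mul_le_sqrt_mul_sqrt {α : Type*} [MeasurableSpace α] {μ : Measure α}
    {f g : α → ℝ} (hf : MemLp f 2 μ) (hg : MemLp g 2 μ) :
    |∫ x, f x * g x ∂μ| ≤ √(∫ x, f x ^ 2 ∂μ) * √(∫ x, g x ^ 2 ∂μ) := by
  have holder := integral_mul_norm_le_Lp_mul_Lq (f := f) (g := g) (μ := μ) .two_two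
    (by simpa using hf) (by simpa using hg)
  calc |∫ x, f x * g x ∂μ| ≤ ∫ x, |f x * g x| ∂μ := abs_integral_le_integral_abs
    _ = ∫ x, ‖f x‖ * ‖g x‖ ∂μ := by simp only [Real.norm_eq_abs, abs_mul]
    _ ≤ √(∫ x, f x ^ 2 ∂μ) * √(∫ x, g x ^ 2 ∂μ) := by
        simpa [Real.sqrt_eq_rpow] using holder

/-- The `L²` norm of `f` on the interval `[a, b]`, for `a ≤ b`. -/
noncomputable def l2Norm (a b : ℝ) (f : ℝ → ℝ) : ℝ := √(∫ x in a..b, f x ^ 2)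

variable {a b C : ℝ} {f f' f'' g h : ℝ → ℝ}

theorem l2Norm_nonneg : 0 ≤ l2Norm a b f := Real.sqrt_nonneg _

theorem l2Norm_sq (hab : a ≤ b) : l2Norm a b f ^ 2 = ∫ x in a..b, f x ^ 2 :=
  Real.sq_sqrt (intervalIntegral.integral_nonneg hab fun _ _ ↦ sq_nonneg _)

theorem l2Norm_one : l2Norm a b (fun _ ↦ 1) = √(b - a) := by simp [l2Norm]

theorem l2Norm_abs : l2Norm a b (fun x ↦ |f x|) = l2Norm a b f := by simp only [l2Norm, sq_abs]

theorem l2Norm_le_mul_l2Norm (hab : a ≤ b) (hf : ContinuousOn f (Icc a b))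
    (hg : ContinuousOn g (Icc a b)) (hC : 0 ≤ C) (hfg : ∀ x ∈ Icc a b, |f x| ≤ C * |g x|) :
    l2Norm a b f ≤ C * l2Norm a b g := by
  refine Real.sqrt_le_iff.2 ⟨mul_nonneg hC l2Norm_nonneg, ?_⟩
  rw [mul_pow, l2Norm_sq hab, ← intervalIntegral.integral_const_mul]
  refine intervalIntegral.integral_mono_on hab ((hf.pow 2).intervalIntegrable_of_Icc hab)
    ((continuousOn_const.mul (hg.pow 2)).intervalIntegrable_of_Icc hab) fun x hx ↦ ?_
  simpa only [mul_pow, sq_abs] using pow_le_pow_left₀ (abs_nonneg _) (hfg x hx) 2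

theorem abs_integral_mul_le_l2Norm_mul_l2Norm (hab : a ≤ b) (hf : ContinuousOn f (Icc a b))
    (hg : ContinuousOn g (Icc a b)) :
    |∫ x in a..b, f x * g x| ≤ l2Norm a b f * l2Norm a b g := by
  have memLp {k : ℝ → ℝ} (hk : ContinuousOn k (Icc a b)) :
      MemLp k 2 (volume.restrict (Ioc a b)) :=
    (memLp_two_iff_integrable_sq
      ((hk.mono Ioc_subset_Icc_self).aestronglyMeasurable measurableSet_Ioc)).2
      (((hk.pow 2).integrableOn_Icc).mono_set Ioc_subset_Icc_self)
  simpa only [l2Norm, intervalIntegral.integral_of_le hab] using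
    abs_integral_mul_le_sqrt_mul_sqrt (memLp hf) (memLp hg)

section Primitive

variable (hf : ∀ x ∈ Icc a b, HasDerivWithinAt f (f' x) (Icc a b) x)
  (hf' : ContinuousOn f' (Icc a b))

include hf hf'

theorem abs_le_sqrt_mul_l2Norm_deriv (ha : f a = 0) {x : ℝ} (hx : x ∈ Icc a b) :
    |f x| ≤ √(b - a) * l2Norm a b f' := by
  have hab : a ≤ b := hx.1.trans hx.2
  have hsub : Icc a x ⊆ Icc a b := Icc_subset_Icc_right hx.2
  have ftc : ∫ y in a..x, f' y = f x := by
    rw [intervalIntegral.integral_eq_sub_of_hasDerivAt_of_le hx.1 (f := f)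
      (fun y hy ↦ (hf y (hsub hy)).continuousWithinAt.mono hsub)
      (fun y hy ↦ (hf y (hsub (Ioo_subset_Icc_self hy))).hasDerivAt
        (Icc_mem_nhds hy.1 (hy.2.trans_le hx.2)))
      ((hf'.mono hsub).intervalIntegrable_of_Icc hx.1), ha, sub_zero]
  calc |f x| ≤ ∫ y in a..x, |f' y| := ftc ▸ intervalIntegral.abs_integral_le_integral_abs hx.1
    _ ≤ ∫ y in a..b, |f' y| :=
        intervalIntegral.integral_mono_interval le_rfl hx.1 hx.2
          (Filter.Eventually.of_forall fun _ ↦ abs_nonneg _)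
          (hf'.abs.intervalIntegrable_of_Icc hab)
    _ ≤ |∫ y in a..b, 1 * (|f' y|)| := by simpa only [one_mul] using le_abs_self _
    _ ≤ l2Norm a b (fun _ ↦ 1) * l2Norm a b fun y ↦ |f' y| :=
        abs_integral_mul_le_l2Norm_mul_l2Norm hab continuousOn_const hf'.abs
    _ = √(b - a) * l2Norm a b f' := by rw [l2Norm_one, l2Norm_abs]

theorem l2Norm_le_mul_l2Norm_deriv (hab : a ≤ b) (ha : f a = 0) :
    l2Norm a b f ≤ (b - a) * l2Norm a b f' := by
  have hfc : ContinuousOn f (Icc a b) := fun x hx ↦ (hf x hx).continuousWithinAt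
  calc l2Norm a b f ≤ √(b - a) * l2Norm a b f' * l2Norm a b (fun _ ↦ 1) :=
        l2Norm_le_mul_l2Norm hab hfc continuousOn_const
          (mul_nonneg (Real.sqrt_nonneg _) l2Norm_nonneg) fun x hx ↦ by
            simpa using abs_le_sqrt_mul_l2Norm_deriv hf hf' ha hx
    _ = (b - a) * l2Norm a b f' := by
        rw [l2Norm_one, mul_right_comm, Real.mul_self_sqrt (sub_nonneg.2 hab)]

theorem abs_integral_mul_mul_le (ha : f a = 0) (hab : a ≤ b) (hg : ContinuousOn g (Icc a b))
    (hh : ContinuousOn h (Icc a b)) :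
    |∫ x in a..b, f x * g x * h x| ≤
      √(b - a) * l2Norm a b f' * l2Norm a b g * l2Norm a b h := by
  have hfg : ContinuousOn (fun x ↦ f x * g x) (Icc a b) :=
    .mul (fun x hx ↦ (hf x hx).continuousWithinAt) hg
  refine (abs_integral_mul_le_l2Norm_mul_l2Norm hab hfg hh).trans
    (mul_le_mul_of_nonneg_right ?_ l2Norm_nonneg)
  refine l2Norm_le_mul_l2Norm hab hfg hg (mul_nonneg (Real.sqrt_nonneg _) l2Norm_nonneg)
    fun x hx ↦ ?_
  rw [abs_mul]
  gcongr
  exact abs_le_sqrt_mul_l2Norm_deriv hf hf' ha hx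

end Primitive

theorem l2Norm_deriv_le_mul_l2Norm_deriv_deriv
    (hf : ∀ x ∈ Icc a b, HasDerivWithinAt f (f' x) (Icc a b) x)
    (hf' : ∀ x ∈ Icc a b, HasDerivWithinAt f' (f'' x) (Icc a b) x)
    (hf'' : ContinuousOn f'' (Icc a b)) (hab : a ≤ b) (ha : f a = 0) (hb : f b = 0) :
    l2Norm a b f' ≤ (b - a) * l2Norm a b f'' := by
  have hfc : ContinuousOn f (Icc a b) := fun x hx ↦ (hf x hx).continuousWithinAt
  have hfc' : ContinuousOn f' (Icc a b) := fun x hx ↦ (hf' x hx).continuousWithinAt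
  have parts : l2Norm a b f' ^ 2 = -∫ x in a..b, f'' x * f x := by
    simp_rw [l2Norm_sq hab, sq]
    rw [intervalIntegral.integral_mul_deriv_eq_deriv_mul_of_hasDerivWithinAt
      (by rwa [uIcc_of_le hab]) (by rwa [uIcc_of_le hab])
      (hf''.intervalIntegrable_of_Icc hab) (hfc'.intervalIntegrable_of_Icc hab), ha, hb]
    ring
  have key : l2Norm a b f' * l2Norm a b f' ≤ (b - a) * l2Norm a b f'' * l2Norm a b f' :=
    calc l2Norm a b f' * l2Norm a b f' = -∫ x in a..b, f'' x * f x := by rw [← parts, sq]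
      _ ≤ |∫ x in a..b, f'' x * f x| := neg_le_abs _
      _ ≤ l2Norm a b f'' * l2Norm a b f :=
          abs_integral_mul_le_l2Norm_mul_l2Norm hab hf'' hfc
      _ ≤ l2Norm a b f'' * ((b - a) * l2Norm a b f') :=
          mul_le_mul_of_nonneg_left (l2Norm_le_mul_l2Norm_deriv hf hfc' hab ha) l2Norm_nonneg
      _ = (b - a) * l2Norm a b f'' * l2Norm a b f' := by ring
  rcases (l2Norm_nonneg (f := f')).eq_or_lt with h0 | hpos
  · exact h0 ▸ mul_nonneg (sub_nonneg.2 hab) l2Norm_nonneg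
  · exact le_of_mul_le_mul_right key hpos

end L2
section Leibniz

theorem exists_continuous_eq_on_Ici_prod_Icc {X : Type*} [TopologicalSpace X]
    {t₀ a b : ℝ} {g : ℝ × ℝ → X} (hab : a ≤ b) (hg : ContinuousOn g (Ici t₀ ×ˢ Icc a b)) :
    ∃ G : ℝ → ℝ → X, Continuous G.uncurry ∧ ∀ t ∈ Ici t₀, ∀ x ∈ Icc a b, G t x = g (t, x) := by
  refine ⟨fun t x ↦ g (max t₀ t, projIcc a b hab x), ?_, fun t ht x hx ↦ ?_⟩
  · exact hg.comp_continuous (f := fun p : ℝ × ℝ ↦ (max t₀ p.1, (projIcc a b hab p.2 : ℝ)))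
      (by fun_prop) fun p ↦ mk_mem_prod (le_max_left t₀ p.1) (Subtype.coe_prop _)
  · simp only [max_eq_right (mem_Ici.1 ht), projIcc_of_mem hab hx]

variable {E : Type*} [NormedAddCommGroup E] [NormedSpace ℝ E] [CompleteSpace E] {t₀ a b : ℝ}

theorem hasDerivAt_integral_integral {G : ℝ → ℝ → E} (hG : Continuous G.uncurry) (t : ℝ) :
    HasDerivAt (fun s ↦ ∫ x in a..b, ∫ r in t₀..s, G r x) (∫ x in a..b, G t x) t := by
  have hswap (s : ℝ) : ∫ x in a..b, ∫ r in t₀..s, G r x = ∫ r in t₀..s, ∫ x in a..b, G r x :=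
    (intervalIntegral_intervalIntegral_swap <|
      (hG.continuousOn.integrableOn_compact (isCompact_uIcc.prod isCompact_uIcc)).mono_set
        (prod_mono uIoc_subset_uIcc uIoc_subset_uIcc)).symm
  simp_rw [hswap]
  exact ((intervalIntegral.continuous_parametric_intervalIntegral_of_continuous' hG a
    b).integral_hasStrictDerivAt t₀ t).hasDerivAt

theorem hasDerivWithinAt_integral_Ici {F F' : ℝ × ℝ → E} (hab : a ≤ b)
    (hF : ContinuousOn F (Ici t₀ ×ˢ Icc a b)) (hF' : ContinuousOn F' (Ici t₀ ×ˢ Icc a b))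
    (hderiv : ∀ t ∈ Ici t₀, ∀ x ∈ Icc a b,
      HasDerivWithinAt (fun s ↦ F (s, x)) (F' (t, x)) (Ici t₀) t)
    {t : ℝ} (ht : t ∈ Ici t₀) :
    HasDerivWithinAt (fun s ↦ ∫ x in a..b, F (s, x)) (∫ x in a..b, F' (t, x)) (Ici t₀) t := by
  obtain ⟨G, hG, hGF'⟩ := exists_continuous_eq_on_Ici_prod_Icc hab hF'
  have ftc {s : ℝ} (hs : s ∈ Ici t₀) {x : ℝ} (hx : x ∈ Icc a b) :
      F (s, x) = F (t₀, x) + ∫ r in t₀..s, G r x := by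
    rw [intervalIntegral.integral_eq_sub_of_hasDerivAt_of_le hs (f := fun r ↦ F (r, x)),
      add_sub_cancel]
    · exact hF.comp (by fun_prop) fun r hr ↦ mk_mem_prod hr.1 hx
    · intro r hr
      rw [hGF' r hr.1.le x hx]
      exact (hderiv r hr.1.le x hx).hasDerivAt (Ici_mem_nhds hr.1)
    · exact (hG.comp (.prodMk_left x)).intervalIntegrable _ _
  have hint {s : ℝ} (hs : s ∈ Ici t₀) : ∫ x in a..b, F (s, x) =
      (∫ x in a..b, F (t₀, x)) + ∫ x in a..b, ∫ r in t₀..s, G r x := by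
    rw [← intervalIntegral.integral_add]
    · refine intervalIntegral.integral_congr fun x hx ↦ ftc hs ?_
      rwa [uIcc_of_le hab] at hx
    · exact (hF.comp (by fun_prop)
        fun x hx ↦ mk_mem_prod self_mem_Ici hx).intervalIntegrable_of_Icc hab
    · exact (intervalIntegral.continuous_parametric_intervalIntegral_of_continuous'
        (f := fun x r ↦ G r x) (hG.comp continuous_swap) _ _).intervalIntegrable _ _
  have hF't : ∫ x in a..b, F' (t, x) = ∫ x in a..b, G t x := by
    refine intervalIntegral.integral_congr fun x hx ↦ (hGF' t ht x ?_).symm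
    rwa [uIcc_of_le hab] at hx
  rw [hF't]
  exact ((hasDerivAt_integral_integral hG t).const_add _).hasDerivWithinAt.congr
    (fun s hs ↦ hint hs) (hint ht)

end Leibniz

section PartialDeriv

variable {E : Type*} [NormedAddCommGroup E] [NormedSpace ℝ E] {S : Set (ℝ × ℝ)} {s t : Set ℝ}
  {f : ℝ × ℝ → E} {r x : ℝ} {n m : WithTop ℕ∞}

/-- The partial derivative within `S` of a function on the plane in its first variable. It is an
actual, possibly one-sided, derivative also at boundary points of a product set `S`, where `deriv`
looks outside of `S`. -/
noncomputable def partialFst (S : Set (ℝ × ℝ)) (f : ℝ × ℝ → E) (p : ℝ × ℝ) : E :=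
  fderivWithin ℝ f S p (1, 0)

/-- The partial derivative within `S` of a function on the plane in its second variable; see
`partialFst`. -/
noncomputable def partialSnd (S : Set (ℝ × ℝ)) (f : ℝ × ℝ → E) (p : ℝ × ℝ) : E :=
  fderivWithin ℝ f S p (0, 1)

theorem contDiffOn_partialFst (hS : UniqueDiffOn ℝ S) (hf : ContDiffOn ℝ n f S)
    (hmn : m + 1 ≤ n) : ContDiffOn ℝ m (partialFst S f) S :=
  (hf.fderivWithin hS hmn).clm_apply contDiffOn_const

theorem contDiffOn_partialSnd (hS : UniqueDiffOn ℝ S) (hf : ContDiffOn ℝ n f S)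
    (hmn : m + 1 ≤ n) : ContDiffOn ℝ m (partialSnd S f) S :=
  (hf.fderivWithin hS hmn).clm_apply contDiffOn_const

theorem hasDerivWithinAt_partialFst (hf : DifferentiableOn ℝ f (s ×ˢ t)) (hr : r ∈ s)
    (hx : x ∈ t) : HasDerivWithinAt (fun r ↦ f (r, x)) (partialFst (s ×ˢ t) f (r, x)) s r :=
  (hf (r, x) ⟨hr, hx⟩).hasFDerivWithinAt.comp_hasDerivWithinAt r
    ((hasDerivWithinAt_id r s).prodMk (hasDerivWithinAt_const r s x)) fun _ hr ↦ mk_mem_prod hr hx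

theorem hasDerivWithinAt_partialSnd (hf : DifferentiableOn ℝ f (s ×ˢ t)) (hr : r ∈ s)
    (hx : x ∈ t) : HasDerivWithinAt (fun x ↦ f (r, x)) (partialSnd (s ×ˢ t) f (r, x)) t x :=
  (hf (r, x) ⟨hr, hx⟩).hasFDerivWithinAt.comp_hasDerivWithinAt x
    ((hasDerivWithinAt_const x t r).prodMk (hasDerivWithinAt_id x t)) fun _ hx ↦ mk_mem_prod hr hx

theorem deriv_fst_eq_partialFst (hf : DifferentiableOn ℝ f (s ×ˢ t)) (hr : s ∈ nhds r)
    (hx : x ∈ t) : deriv (fun r ↦ f (r, x)) r = partialFst (s ×ˢ t) f (r, x) :=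
  ((hasDerivWithinAt_partialFst hf (mem_of_mem_nhds hr) hx).hasDerivAt hr).deriv

theorem deriv_snd_eq_partialSnd (hf : DifferentiableOn ℝ f (s ×ˢ t)) (hr : r ∈ s)
    (hx : t ∈ nhds x) : deriv (fun x ↦ f (r, x)) x = partialSnd (s ×ˢ t) f (r, x) :=
  ((hasDerivWithinAt_partialSnd hf hr (mem_of_mem_nhds hx)).hasDerivAt hx).deriv

theorem deriv_deriv_snd_eq_partialSnd_partialSnd (hf : DifferentiableOn ℝ f (s ×ˢ t))
    (hf' : DifferentiableOn ℝ (partialSnd (s ×ˢ t) f) (s ×ˢ t)) (hr : r ∈ s) (hx : t ∈ nhds x) :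
    deriv (deriv fun x ↦ f (r, x)) x =
      partialSnd (s ×ˢ t) (partialSnd (s ×ˢ t) f) (r, x) := by
  rw [← deriv_snd_eq_partialSnd hf' hr hx]
  refine Filter.EventuallyEq.deriv_eq ?_
  filter_upwards [eventually_mem_nhds_iff.2 hx] with y hy using deriv_snd_eq_partialSnd hf hr hy

theorem partialFst_partialSnd_eq_partialSnd_partialFst (hS : UniqueDiffOn ℝ S)
    (hcl : S ⊆ closure (interior S)) (hf : ContDiffOn ℝ 2 f S) {p : ℝ × ℝ} (hp : p ∈ S) :
    partialFst S (partialSnd S f) p = partialSnd S (partialFst S f) p := by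
  have hsymm : IsSymmSndFDerivWithinAt ℝ f S p :=
    (hf p hp).isSymmSndFDerivWithinAt (by simp) hS (hcl hp) hp
  have hdiff : DifferentiableWithinAt ℝ (fderivWithin ℝ f S) S p :=
    (hf.fderivWithin (m := 1) hS one_add_one_eq_two.le).differentiableOn one_ne_zero p hp
  have hsnd (c d : ℝ × ℝ) : fderivWithin ℝ (fun q ↦ fderivWithin ℝ f S q c) S p d =
      fderivWithin ℝ (fderivWithin ℝ f S) S p d c := by
    simp [fderivWithin_clm_apply (hS p hp) hdiff (differentiableWithinAt_const c)]
  exact (hsnd _ _).trans ((hsymm _ _).trans (hsnd _ _).symm)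

end PartialDeriv

section Exponents

variable {J K A p q r s α β : ℝ}

theorem sq_add_mul_add_sq_add_mul_le (hr : 0 ≤ r) (hs : 0 ≤ s) (hα : 0 ≤ α) (hβ : 0 ≤ β) :
    (p ^ 2 + 2 * α * (p * q)) * r + (q ^ 2 + 2 * β * (p * q)) * s ≤
      (1 + (α + β)) * (p ^ 2 + q ^ 2) * √(r ^ 2 + s ^ 2) := by
  have hpq : 2 * (p * q) ≤ p ^ 2 + q ^ 2 := mul_assoc 2 p q ▸ two_mul_le_add_sq p q
  calc (p ^ 2 + 2 * α * (p * q)) * r + (q ^ 2 + 2 * β * (p * q)) * s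
      = (p ^ 2 + α * (2 * (p * q))) * r + (q ^ 2 + β * (2 * (p * q))) * s := by ring
    _ ≤ (p ^ 2 + α * (p ^ 2 + q ^ 2)) * √(r ^ 2 + s ^ 2)
          + (q ^ 2 + β * (p ^ 2 + q ^ 2)) * √(r ^ 2 + s ^ 2) := by
        gcongr
        · exact Real.le_sqrt_of_sq_le (le_add_of_nonneg_right (sq_nonneg s))
        · exact Real.le_sqrt_of_sq_le (le_add_of_nonneg_left (sq_nonneg r))
    _ = (1 + (α + β)) * (p ^ 2 + q ^ 2) * √(r ^ 2 + s ^ 2) := by ring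

theorem mul_sqrt_le_rpow_mul_rpow (hJ : 0 ≤ J) (hJK : J ≤ K) :
    J * √K ≤ J ^ ((3 : ℝ) / 4) * K ^ ((3 : ℝ) / 4) := by
  have hK : 0 ≤ K := hJ.trans hJK
  calc J * √K = J ^ ((3 : ℝ) / 4) * J ^ ((1 : ℝ) / 4) * K ^ ((1 : ℝ) / 2) := by
        rw [← Real.rpow_add' hJ (by norm_num), Real.sqrt_eq_rpow]
        norm_num
    _ ≤ J ^ ((3 : ℝ) / 4) * K ^ ((1 : ℝ) / 4) * K ^ ((1 : ℝ) / 2) := by gcongr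
    _ = J ^ ((3 : ℝ) / 4) * K ^ ((3 : ℝ) / 4) := by
        rw [mul_assoc, ← Real.rpow_add' hK (by norm_num)]
        norm_num

theorem two_mul_mul_sqrt_le_rpow (hJ : 0 ≤ J) (hJK : J ≤ K) (hA : 0 ≤ A) :
    (1 + A) * (2 * J) * √(2 * K) ≤ 8 * J * √K
      + 8 * √3 * (2 : ℝ) ^ ((1 : ℝ) / 4) * A * J ^ ((3 : ℝ) / 4) * K ^ ((3 : ℝ) / 4) := by
  have hsqrt : √(2 * K) ≤ 2 * √K := by
    rw [Real.sqrt_mul zero_le_two]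
    gcongr
    exact Real.sqrt_le_iff.2 (by norm_num)
  have hconst : 4 ≤ 8 * √3 * (2 : ℝ) ^ ((1 : ℝ) / 4) := by
    have h3 : 1 ≤ √3 := Real.one_le_sqrt.2 (by norm_num)
    have h2 : 1 ≤ (2 : ℝ) ^ ((1 : ℝ) / 4) := Real.one_le_rpow one_le_two (by norm_num)
    linarith [one_le_mul_of_one_le_of_one_le h3 h2]
  calc (1 + A) * (2 * J) * √(2 * K) ≤ (1 + A) * (2 * J) * (2 * √K) := by gcongr
    _ = 4 * (J * √K) + 4 * A * (J * √K) := by ring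
    _ ≤ 8 * (J * √K) + 8 * √3 * (2 : ℝ) ^ ((1 : ℝ) / 4) * A *
          (J ^ ((3 : ℝ) / 4) * K ^ ((3 : ℝ) / 4)) := by
        have hinterp := mul_sqrt_le_rpow_mul_rpow hJ hJK
        have h0 : 0 ≤ J * √K := by positivity
        exact add_le_add (by linarith) <|
          mul_le_mul (mul_le_mul_of_nonneg_right hconst hA) hinterp h0 (by positivity)
    _ = _ := by ring

end Exponents

section Strip

variable {t₀ a b c t : ℝ} {f u v w : ℝ × ℝ → ℝ}

local notation "Ω" => SProd.sprod (Ici t₀) (Icc a b)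
local notation "∂ₜ" => partialFst (SProd.sprod (Ici t₀) (Icc a b))
local notation "∂ₓ" => partialSnd (SProd.sprod (Ici t₀) (Icc a b))

theorem closure_Ioi_prod_Ioo (hab : a < b) : closure (Ioi t₀ ×ˢ Ioo a b) = Ω := by
  rw [closure_prod_eq, closure_Ioi, closure_Ioo hab.ne]

theorem continuousOn_slice (hf : ContinuousOn f Ω) (ht : t ∈ Ici t₀) :
    ContinuousOn (fun x ↦ f (t, x)) (Icc a b) :=
  hf.comp (by fun_prop) fun _ hx ↦ mk_mem_prod ht hx

/-- `f` is `C²` up to the boundary on the half-strip `[t₀, ∞) × [a, b]` and vanishes on its lateral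
sides `x = a` and `x = b`. -/
structure IsC2Dirichlet (t₀ a b : ℝ) (f : ℝ × ℝ → ℝ) : Prop where
  lt : a < b
  contDiffOn : ContDiffOn ℝ 2 f (Ici t₀ ×ˢ Icc a b)
  left : ∀ t ∈ Ici t₀, f (t, a) = 0
  right : ∀ t ∈ Ici t₀, f (t, b) = 0

namespace IsC2Dirichlet

section Regularity

variable (hf : IsC2Dirichlet t₀ a b f)

include hf

theorem uniqueDiffOn : UniqueDiffOn ℝ Ω := (uniqueDiffOn_Ici t₀).prod (uniqueDiffOn_Icc hf.lt)

theorem differentiableOn : DifferentiableOn ℝ f Ω := hf.contDiffOn.differentiableOn two_ne_zero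

theorem contDiffOn_dt : ContDiffOn ℝ 1 (∂ₜ f) Ω :=
  contDiffOn_partialFst hf.uniqueDiffOn hf.contDiffOn one_add_one_eq_two.le

theorem contDiffOn_dx : ContDiffOn ℝ 1 (∂ₓ f) Ω :=
  contDiffOn_partialSnd hf.uniqueDiffOn hf.contDiffOn one_add_one_eq_two.le

theorem differentiableOn_dt : DifferentiableOn ℝ (∂ₜ f) Ω :=
  hf.contDiffOn_dt.differentiableOn one_ne_zero

theorem differentiableOn_dx : DifferentiableOn ℝ (∂ₓ f) Ω :=
  hf.contDiffOn_dx.differentiableOn one_ne_zero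

theorem continuousOn_dtdx : ContinuousOn (∂ₜ (∂ₓ f)) Ω :=
  (contDiffOn_partialFst (m := 0) hf.uniqueDiffOn hf.contDiffOn_dx (zero_add 1).le).continuousOn

theorem continuousOn_dxdt : ContinuousOn (∂ₓ (∂ₜ f)) Ω :=
  (contDiffOn_partialSnd (m := 0) hf.uniqueDiffOn hf.contDiffOn_dt (zero_add 1).le).continuousOn

theorem continuousOn_dxdx : ContinuousOn (∂ₓ (∂ₓ f)) Ω :=
  (contDiffOn_partialSnd (m := 0) hf.uniqueDiffOn hf.contDiffOn_dx (zero_add 1).le).continuousOn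

theorem dtdx_eq_dxdt {p : ℝ × ℝ} (hp : p ∈ Ω) : ∂ₜ (∂ₓ f) p = ∂ₓ (∂ₜ f) p := by
  refine partialFst_partialSnd_eq_partialSnd_partialFst hf.uniqueDiffOn ?_ hf.contDiffOn hp
  rw [interior_prod_eq, interior_Ici, interior_Icc, closure_Ioi_prod_Ioo hf.lt]

theorem dt_eq_zero {x : ℝ} (hx : x ∈ Icc a b) (hzero : ∀ s ∈ Ici t₀, f (s, x) = 0)
    (ht : t ∈ Ici t₀) : ∂ₜ f (t, x) = 0 :=
  (uniqueDiffOn_Ici t₀ t ht).eq_deriv _ (hasDerivWithinAt_partialFst hf.differentiableOn ht hx)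
    ((hasDerivWithinAt_const t _ 0).congr hzero (hzero t ht))

end Regularity

theorem integral_dx_mul_dtdx (hf : IsC2Dirichlet t₀ a b f) (ht : t ∈ Ici t₀) :
    ∫ x in a..b, ∂ₓ f (t, x) * ∂ₜ (∂ₓ f) (t, x) =
      -∫ x in a..b, ∂ₓ (∂ₓ f) (t, x) * ∂ₜ f (t, x) := by
  have hab : a ≤ b := hf.lt.le
  have hcomm : ∫ x in a..b, ∂ₓ f (t, x) * ∂ₜ (∂ₓ f) (t, x) =
      ∫ x in a..b, ∂ₓ f (t, x) * ∂ₓ (∂ₜ f) (t, x) := by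
    refine intervalIntegral.integral_congr fun x hx ↦ ?_
    rw [uIcc_of_le hab] at hx
    simp only [hf.dtdx_eq_dxdt (mk_mem_prod ht hx)]
  rw [hcomm, intervalIntegral.integral_mul_deriv_eq_deriv_mul_of_hasDerivWithinAt
      (u := fun x ↦ ∂ₓ f (t, x)) (v := fun x ↦ ∂ₜ f (t, x)),
    hf.dt_eq_zero (left_mem_Icc.2 hab) hf.left ht,
    hf.dt_eq_zero (right_mem_Icc.2 hab) hf.right ht, mul_zero, mul_zero, sub_zero, zero_sub]
  · rw [uIcc_of_le hab]
    exact fun x hx ↦ hasDerivWithinAt_partialSnd hf.differentiableOn_dx ht hx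
  · rw [uIcc_of_le hab]
    exact fun x hx ↦ hasDerivWithinAt_partialSnd hf.differentiableOn_dt ht hx
  · exact (continuousOn_slice hf.continuousOn_dxdx ht).intervalIntegrable_of_Icc hab
  · exact (continuousOn_slice hf.continuousOn_dxdt ht).intervalIntegrable_of_Icc hab

theorem hasDerivWithinAt_integral_dx_sq (hf : IsC2Dirichlet t₀ a b f) (ht : t ∈ Ici t₀) :
    HasDerivWithinAt (fun s ↦ ∫ x in a..b, ∂ₓ f (s, x) ^ 2)
      (-2 * ∫ x in a..b, ∂ₓ (∂ₓ f) (t, x) * ∂ₜ f (t, x)) (Ici t₀) t := by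
  have hdx := hf.contDiffOn_dx.continuousOn
  have hderiv := hasDerivWithinAt_integral_Ici (F := fun p ↦ ∂ₓ f p ^ 2)
    (F' := fun p ↦ 2 * (∂ₓ f p * ∂ₜ (∂ₓ f) p)) hf.lt.le (hdx.pow 2)
    (continuousOn_const.mul (hdx.mul hf.continuousOn_dtdx))
    (fun s hs x hx ↦ by
      simpa [mul_assoc] using (hasDerivWithinAt_partialFst hf.differentiableOn_dx hs hx).fun_pow 2)
    ht
  rwa [intervalIntegral.integral_const_mul, hf.integral_dx_mul_dtdx ht, mul_neg,
    ← neg_mul] at hderiv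

theorem integral_deriv_sq (hf : IsC2Dirichlet t₀ a b f) (ht : t ∈ Ici t₀) :
    ∫ x in a..b, deriv (fun y ↦ f (t, y)) x ^ 2 = ∫ x in a..b, ∂ₓ f (t, x) ^ 2 :=
  intervalIntegral.integral_congr_Ioo_of_le hf.lt.le fun x hx ↦ by
    simp only [deriv_snd_eq_partialSnd hf.differentiableOn ht (Icc_mem_nhds hx.1 hx.2)]

theorem integral_deriv_deriv_sq (hf : IsC2Dirichlet t₀ a b f) (ht : t ∈ Ici t₀) :
    ∫ x in a..b, deriv (deriv fun y ↦ f (t, y)) x ^ 2 = ∫ x in a..b, ∂ₓ (∂ₓ f) (t, x) ^ 2 :=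
  intervalIntegral.integral_congr_Ioo_of_le hf.lt.le fun x hx ↦ by
    simp only [deriv_deriv_snd_eq_partialSnd_partialSnd hf.differentiableOn
      hf.differentiableOn_dx ht (Icc_mem_nhds hx.1 hx.2)]

theorem integral_dx_sq_le (hf : IsC2Dirichlet t₀ a b f) (ht : t ∈ Ici t₀) :
    ∫ x in a..b, ∂ₓ f (t, x) ^ 2 ≤ (b - a) ^ 2 * ∫ x in a..b, ∂ₓ (∂ₓ f) (t, x) ^ 2 := by
  simpa only [mul_pow, l2Norm_sq hf.lt.le] using
    pow_le_pow_left₀ l2Norm_nonneg (l2Norm_deriv_le_mul_l2Norm_deriv_deriv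
      (fun _ hx ↦ hasDerivWithinAt_partialSnd hf.differentiableOn ht hx)
      (fun _ hx ↦ hasDerivWithinAt_partialSnd hf.differentiableOn_dx ht hx)
      (continuousOn_slice hf.continuousOn_dxdx ht) hf.lt.le (hf.left t ht) (hf.right t ht)) 2

theorem abs_integral_mul_mul_le {g h : ℝ → ℝ} (hf : IsC2Dirichlet t₀ a b f) (ht : t ∈ Ici t₀)
    (hg : ContinuousOn g (Icc a b)) (hh : ContinuousOn h (Icc a b)) :
    |∫ x in a..b, f (t, x) * g x * h x| ≤
      √(b - a) * l2Norm a b (fun x ↦ ∂ₓ f (t, x)) * l2Norm a b g * l2Norm a b h :=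
  _root_.abs_integral_mul_mul_le
    (fun _ hx ↦ hasDerivWithinAt_partialSnd hf.differentiableOn ht hx)
    (continuousOn_slice hf.contDiffOn_dx.continuousOn ht) (hf.left t ht) hf.lt.le hg hh

end IsC2Dirichlet

/-- Half the sum of the squared `L²(a, b)` norms of `f (t, ·)` and `g (t, ·)`. The functional `J` is
the case `f = ∂ₓu`, `g = ∂ₓv`, and `K` is the case `f = ∂ₓₓu`, `g = ∂ₓₓv`. -/
noncomputable def pairEnergy (a b : ℝ) (f g : ℝ × ℝ → ℝ) (t : ℝ) : ℝ :=
  (1 / 2) * ((∫ x in a..b, f (t, x) ^ 2) + ∫ x in a..b, g (t, x) ^ 2)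

theorem two_mul_pairEnergy (hab : a ≤ b) : 2 * pairEnergy a b u v t =
    l2Norm a b (fun x ↦ u (t, x)) ^ 2 + l2Norm a b (fun x ↦ v (t, x)) ^ 2 := by
  rw [l2Norm_sq hab, l2Norm_sq hab, pairEnergy]
  ring

theorem pairEnergy_nonneg (hab : a ≤ b) : 0 ≤ pairEnergy a b u v t := by
  have h : 0 ≤ 2 * pairEnergy a b u v t := two_mul_pairEnergy hab ▸ by positivity
  linarith

theorem pairEnergy_dx_le (hu : IsC2Dirichlet t₀ a b u) (hv : IsC2Dirichlet t₀ a b v)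
    (ht : t ∈ Ici t₀) :
    pairEnergy a b (∂ₓ u) (∂ₓ v) t ≤ (b - a) ^ 2 * pairEnergy a b (∂ₓ (∂ₓ u)) (∂ₓ (∂ₓ v)) t := by
  unfold pairEnergy
  linear_combination (hu.integral_dx_sq_le ht + hv.integral_dx_sq_le ht) / 2

theorem hasDerivWithinAt_pairEnergy_dx (hu : IsC2Dirichlet t₀ a b u)
    (hv : IsC2Dirichlet t₀ a b v) (ht : t ∈ Ici t₀) :
    HasDerivWithinAt (pairEnergy a b (∂ₓ u) (∂ₓ v))
      (-(∫ x in a..b, ∂ₓ (∂ₓ u) (t, x) * ∂ₜ u (t, x))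
        + -∫ x in a..b, ∂ₓ (∂ₓ v) (t, x) * ∂ₜ v (t, x)) (Ici t₀) t :=
  (((hu.hasDerivWithinAt_integral_dx_sq ht).add
    (hv.hasDerivWithinAt_integral_dx_sq ht)).const_mul (1 / 2)).congr_deriv (by ring)

/-- `w` satisfies the Burgers equation `∂ₜw = ∂ₓₓw - w ∂ₓw - c ∂ₓ(uv)` in the open half-strip
`(t₀, ∞) × (a, b)`; the coupled system is made of one such equation for `w = u` and one for
`w = v`. Only interior points are used since `deriv` is meaningless on the boundary of the domain
of `w`. -/
def SolvesBurgers (t₀ a b c : ℝ) (u v w : ℝ × ℝ → ℝ) : Prop :=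
  ∀ t ∈ Ioi t₀, ∀ x ∈ Ioo a b,
    deriv (fun s ↦ w (s, x)) t =
      deriv (deriv fun y ↦ w (t, y)) x - w (t, x) * deriv (fun y ↦ w (t, y)) x
        - c * deriv (fun y ↦ u (t, y) * v (t, y)) x

namespace SolvesBurgers

theorem eqOn (h : SolvesBurgers t₀ a b c u v w) (hu : IsC2Dirichlet t₀ a b u)
    (hv : IsC2Dirichlet t₀ a b v) (hw : IsC2Dirichlet t₀ a b w) :
    EqOn (∂ₜ w) (fun p ↦ ∂ₓ (∂ₓ w) p - w p * ∂ₓ w p - c * (∂ₓ u p * v p + u p * ∂ₓ v p)) Ω := by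
  have hcu := hu.contDiffOn.continuousOn
  have hcv := hv.contDiffOn.continuousOn
  have hcw := hw.contDiffOn.continuousOn
  have hcu' := hu.contDiffOn_dx.continuousOn
  have hcv' := hv.contDiffOn_dx.continuousOn
  have hcw' := hw.contDiffOn_dx.continuousOn
  have hcw'' := hw.continuousOn_dxdx
  refine EqOn.of_subset_closure (s := Ioi t₀ ×ˢ Ioo a b) ?_ hw.contDiffOn_dt.continuousOn
    (by fun_prop) (prod_mono Ioi_subset_Ici_self Ioo_subset_Icc_self)
    (closure_Ioi_prod_Ioo hw.lt).ge
  rintro ⟨t, x⟩ ⟨ht : t ∈ Ioi t₀, hx : x ∈ Ioo a b⟩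
  have ht' : t ∈ Ici t₀ := Ioi_subset_Ici_self ht
  have hx' : x ∈ Icc a b := Ioo_subset_Icc_self hx
  have hnhds : Icc a b ∈ nhds x := Icc_mem_nhds hx.1 hx.2
  have hprod : deriv (fun y ↦ u (t, y) * v (t, y)) x =
      ∂ₓ u (t, x) * v (t, x) + u (t, x) * ∂ₓ v (t, x) :=
    (((hasDerivWithinAt_partialSnd hu.differentiableOn ht' hx').mul
      (hasDerivWithinAt_partialSnd hv.differentiableOn ht' hx')).hasDerivAt hnhds).deriv
  have heq := h t ht x hx
  rwa [deriv_fst_eq_partialFst hw.differentiableOn (Ici_mem_nhds ht) hx',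
    deriv_deriv_snd_eq_partialSnd_partialSnd hw.differentiableOn hw.differentiableOn_dx ht' hnhds,
    deriv_snd_eq_partialSnd hw.differentiableOn ht' hnhds, hprod] at heq

theorem neg_integral_dxdx_mul_dt_eq (h : SolvesBurgers t₀ a b c u v w)
    (hu : IsC2Dirichlet t₀ a b u) (hv : IsC2Dirichlet t₀ a b v) (hw : IsC2Dirichlet t₀ a b w)
    (ht : t ∈ Ici t₀) :
    -∫ x in a..b, ∂ₓ (∂ₓ w) (t, x) * ∂ₜ w (t, x) =
      -(∫ x in a..b, ∂ₓ (∂ₓ w) (t, x) ^ 2)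
        + (∫ x in a..b, w (t, x) * ∂ₓ w (t, x) * ∂ₓ (∂ₓ w) (t, x))
        + c * ((∫ x in a..b, v (t, x) * ∂ₓ u (t, x) * ∂ₓ (∂ₓ w) (t, x))
          + ∫ x in a..b, u (t, x) * ∂ₓ v (t, x) * ∂ₓ (∂ₓ w) (t, x)) := by
  have hwxx := continuousOn_slice hw.continuousOn_dxdx ht
  have hsq : IntervalIntegrable (fun x ↦ ∂ₓ (∂ₓ w) (t, x) ^ 2) volume a b :=
    (hwxx.pow 2).intervalIntegrable_of_Icc hw.lt.le
  have cubic {f g : ℝ × ℝ → ℝ} (hf : ContinuousOn f Ω) (hg : ContinuousOn g Ω) :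
      IntervalIntegrable (fun x ↦ f (t, x) * g (t, x) * ∂ₓ (∂ₓ w) (t, x)) volume a b :=
    (((continuousOn_slice hf ht).mul (continuousOn_slice hg ht)).mul
      hwxx).intervalIntegrable_of_Icc hw.lt.le
  have hww := cubic hw.contDiffOn.continuousOn hw.contDiffOn_dx.continuousOn
  have hvu := cubic hv.contDiffOn.continuousOn hu.contDiffOn_dx.continuousOn
  have huv := cubic hu.contDiffOn.continuousOn hv.contDiffOn_dx.continuousOn
  rw [← intervalIntegral.integral_neg, ← intervalIntegral.integral_neg,
    ← intervalIntegral.integral_add (by exact hsq.neg) hww,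
    ← intervalIntegral.integral_add hvu huv, ← intervalIntegral.integral_const_mul,
    ← intervalIntegral.integral_add (by exact hsq.neg.add hww) (by exact (hvu.add huv).const_mul c)]
  refine intervalIntegral.integral_congr fun x hx ↦ ?_
  rw [uIcc_of_le hw.lt.le] at hx
  simp only [h.eqOn hu hv hw (mk_mem_prod ht hx)]
  ring

theorem neg_integral_dxdx_mul_dt_le (h : SolvesBurgers t₀ a b c u v w)
    (hu : IsC2Dirichlet t₀ a b u) (hv : IsC2Dirichlet t₀ a b v) (hw : IsC2Dirichlet t₀ a b w)
    (ht : t ∈ Ici t₀) :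
    -∫ x in a..b, ∂ₓ (∂ₓ w) (t, x) * ∂ₜ w (t, x) ≤
      -l2Norm a b (fun x ↦ ∂ₓ (∂ₓ w) (t, x)) ^ 2
        + √(b - a) * (l2Norm a b (fun x ↦ ∂ₓ w (t, x)) ^ 2
          + 2 * |c| * (l2Norm a b (fun x ↦ ∂ₓ u (t, x)) * l2Norm a b fun x ↦ ∂ₓ v (t, x)))
          * l2Norm a b fun x ↦ ∂ₓ (∂ₓ w) (t, x) := by
  have hcw'' := continuousOn_slice hw.continuousOn_dxdx ht
  have hself := hw.abs_integral_mul_mul_le ht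
    (continuousOn_slice hw.contDiffOn_dx.continuousOn ht) hcw''
  have hcoupling := (abs_add_le _ _).trans <| add_le_add
    (hv.abs_integral_mul_mul_le ht (continuousOn_slice hu.contDiffOn_dx.continuousOn ht) hcw'')
    (hu.abs_integral_mul_mul_le ht (continuousOn_slice hv.contDiffOn_dx.continuousOn ht) hcw'')
  have hcoupling' := (le_abs_self _).trans <| (abs_mul c _).trans_le <|
    mul_le_mul_of_nonneg_left hcoupling (abs_nonneg c)
  rw [h.neg_integral_dxdx_mul_dt_eq hu hv hw ht, l2Norm_sq hw.lt.le]
  linear_combination (le_abs_self _).trans hself + hcoupling'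

theorem neg_integral_dxdx_mul_dt_add_le {α β : ℝ} (hequ : SolvesBurgers t₀ a b α u v u)
    (heqv : SolvesBurgers t₀ a b β u v v) (hu : IsC2Dirichlet t₀ a b u)
    (hv : IsC2Dirichlet t₀ a b v) (ht : t ∈ Ici t₀) :
    -(∫ x in a..b, ∂ₓ (∂ₓ u) (t, x) * ∂ₜ u (t, x))
        + -∫ x in a..b, ∂ₓ (∂ₓ v) (t, x) * ∂ₜ v (t, x) ≤
      -2 * pairEnergy a b (∂ₓ (∂ₓ u)) (∂ₓ (∂ₓ v)) t
        + √(b - a) * ((1 + (|α| + |β|)) * (2 * pairEnergy a b (∂ₓ u) (∂ₓ v) t)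
          * √(2 * pairEnergy a b (∂ₓ (∂ₓ u)) (∂ₓ (∂ₓ v)) t)) := by
  have hab : a ≤ b := hu.lt.le
  have hcubic := mul_le_mul_of_nonneg_left
    (sq_add_mul_add_sq_add_mul_le (p := l2Norm a b fun x ↦ ∂ₓ u (t, x))
      (q := l2Norm a b fun x ↦ ∂ₓ v (t, x)) (r := l2Norm a b fun x ↦ ∂ₓ (∂ₓ u) (t, x))
      (s := l2Norm a b fun x ↦ ∂ₓ (∂ₓ v) (t, x)) l2Norm_nonneg l2Norm_nonneg (abs_nonneg α)
      (abs_nonneg β)) (Real.sqrt_nonneg (b - a))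
  rw [neg_mul, two_mul_pairEnergy hab, two_mul_pairEnergy hab]
  linear_combination hequ.neg_integral_dxdx_mul_dt_le hu hv hu ht
    + heqv.neg_integral_dxdx_mul_dt_le hu hv hv ht + hcubic

end SolvesBurgers

end Strip

section UnitStrip

local notation "∂ₜ" => partialFst (SProd.sprod (Ici (0 : ℝ)) (Icc (0 : ℝ) 1))
local notation "∂ₓ" => partialSnd (SProd.sprod (Ici (0 : ℝ)) (Icc (0 : ℝ) 1))

theorem coupled_burgers_energy_inequality_raw_general (a b : ℝ) (u v : ℝ × ℝ → ℝ)
    (hu : ContDiffOn ℝ 2 u (Ici 0 ×ˢ Icc 0 1)) (hv : ContDiffOn ℝ 2 v (Ici 0 ×ˢ Icc 0 1))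
    (hequ : SolvesBurgers 0 0 1 a u v u) (heqv : SolvesBurgers 0 0 1 b u v v)
    (hbc : ∀ t ≥ (0 : ℝ), u (t, 0) = 0 ∧ u (t, 1) = 0 ∧ v (t, 0) = 0 ∧ v (t, 1) = 0)
    (J K : ℝ → ℝ)
    (hJ : ∀ t, J t = (1 / 2) * ((∫ x in (0 : ℝ)..1, deriv (fun y ↦ u (t, y)) x ^ 2)
      + ∫ x in (0 : ℝ)..1, deriv (fun y ↦ v (t, y)) x ^ 2))
    (hK : ∀ t, K t = (1 / 2) * ((∫ x in (0 : ℝ)..1, deriv (deriv fun y ↦ u (t, y)) x ^ 2)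
      + ∫ x in (0 : ℝ)..1, deriv (deriv fun y ↦ v (t, y)) x ^ 2)) :
    ∃ J' : ℝ → ℝ, (∀ t ≥ (0 : ℝ), HasDerivWithinAt J (J' t) (Ici 0) t) ∧
      ∀ t ≥ (0 : ℝ), J' t ≤ -2 * K t + 8 * J t * √(K t)
        + 8 * √3 * (2 : ℝ) ^ ((1 : ℝ) / 4) * (|a| + |b|)
          * J t ^ ((3 : ℝ) / 4) * K t ^ ((3 : ℝ) / 4) := by
  have hu₀ : IsC2Dirichlet 0 0 1 u :=
    ⟨one_pos, hu, fun t ht ↦ (hbc t ht).1, fun t ht ↦ (hbc t ht).2.1⟩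
  have hv₀ : IsC2Dirichlet 0 0 1 v :=
    ⟨one_pos, hv, fun t ht ↦ (hbc t ht).2.2.1, fun t ht ↦ (hbc t ht).2.2.2⟩
  have hJ_eq : EqOn J (pairEnergy 0 1 (∂ₓ u) (∂ₓ v)) (Ici 0) := fun t ht ↦ by
    rw [hJ, hu₀.integral_deriv_sq ht, hv₀.integral_deriv_sq ht, pairEnergy]
  have hK_eq : EqOn K (pairEnergy 0 1 (∂ₓ (∂ₓ u)) (∂ₓ (∂ₓ v))) (Ici 0) := fun t ht ↦ by
    rw [hK, hu₀.integral_deriv_deriv_sq ht, hv₀.integral_deriv_deriv_sq ht, pairEnergy]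
  refine ⟨_, fun t ht ↦ (hasDerivWithinAt_pairEnergy_dx hu₀ hv₀ ht).congr hJ_eq (hJ_eq ht),
    fun t ht ↦ ?_⟩
  have hrate := hequ.neg_integral_dxdx_mul_dt_add_le heqv hu₀ hv₀ ht
  have hpoincare := pairEnergy_dx_le hu₀ hv₀ ht
  rw [sub_zero, one_pow, one_mul] at hpoincare
  rw [sub_zero, Real.sqrt_one, one_mul] at hrate
  rw [hJ_eq ht, hK_eq ht]
  linarith [two_mul_mul_sqrt_le_rpow (pairEnergy_nonneg zero_le_one) hpoincare
    (add_nonneg (abs_nonneg a) (abs_nonneg b))]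

end UnitStrip

/-- For smooth solutions `u, v` of the coupled Burgers' equations on `[0,∞) × [0,1]`
with zero Dirichlet boundary conditions, the energy
`J t = ½(‖∂ₓu(t)‖² + ‖∂ₓv(t)‖²)` satisfies, with
`K t = ½(‖∂ₓₓu(t)‖² + ‖∂ₓₓv(t)‖²)`,
`J'(t) ≤ -2K + 8JK^{1/2} + 8√3·2^{1/4}(|a|+|b|) J^{3/4} K^{3/4}` for all `t ≥ 0`. -/
theorem coupled_burgers_energy_inequality_raw (a b : ℝ) (u v : ℝ × ℝ → ℝ)
    (hu : ContDiffOn ℝ (⊤ : ℕ∞) u (Set.Ici (0:ℝ) ×ˢ Set.Icc (0:ℝ) 1))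
    (hv : ContDiffOn ℝ (⊤ : ℕ∞) v (Set.Ici (0:ℝ) ×ˢ Set.Icc (0:ℝ) 1))
    (hequ : ∀ t ≥ (0:ℝ), ∀ x ∈ Set.Icc (0:ℝ) 1,
      deriv (fun s => u (s, x)) t =
        deriv (deriv (fun y => u (t, y))) x - u (t, x) * deriv (fun y => u (t, y)) x
          - a * deriv (fun y => u (t, y) * v (t, y)) x)
    (heqv : ∀ t ≥ (0:ℝ), ∀ x ∈ Set.Icc (0:ℝ) 1,
      deriv (fun s => v (s, x)) t =
        deriv (deriv (fun y => v (t, y))) x - v (t, x) * deriv (fun y => v (t, y)) x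
          - b * deriv (fun y => u (t, y) * v (t, y)) x)
    (hbc : ∀ t ≥ (0:ℝ), u (t, 0) = 0 ∧ u (t, 1) = 0 ∧ v (t, 0) = 0 ∧ v (t, 1) = 0)
    (J K : ℝ → ℝ)
    (hJ : ∀ t, J t = (1/2) * ((∫ x in (0:ℝ)..1, (deriv (fun y => u (t, y)) x) ^ 2)
        + ∫ x in (0:ℝ)..1, (deriv (fun y => v (t, y)) x) ^ 2))
    (hK : ∀ t, K t = (1/2) * ((∫ x in (0:ℝ)..1, (deriv (deriv (fun y => u (t, y))) x) ^ 2)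
        + ∫ x in (0:ℝ)..1, (deriv (deriv (fun y => v (t, y))) x) ^ 2)) :
    ∃ J' : ℝ → ℝ, (∀ t ≥ (0:ℝ), HasDerivWithinAt J (J' t) (Set.Ici (0:ℝ)) t) ∧
      ∀ t ≥ (0:ℝ), J' t ≤ -2 * K t + 8 * J t * Real.sqrt (K t)
        + 8 * Real.sqrt 3 * (2:ℝ) ^ ((1:ℝ)/4) * (|a| + |b|)
          * (J t) ^ ((3:ℝ)/4) * (K t) ^ ((3:ℝ)/4) := by
  exact coupled_burgers_energy_inequality_raw_general a b u v (hu.of_le ENat.LEInfty.out)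
    (hv.of_le ENat.LEInfty.out) (fun t ht x hx ↦ hequ t ht.le x (Ioo_subset_Icc_self hx))
    (fun t ht x hx ↦ heqv t ht.le x (Ioo_subset_Icc_self hx)) hbc J K hJ hK
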